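/- For all integers 1 ≤ k ≤ ℓ ≤ n, one has r_{k,n} ≤ r_{ℓ,n}; that is, the number of distinct values attained by the permanent on k×n ±1 matrices is at most the number of distinct values attained by the permanent on ℓ×n ±1 matrices. In particular, r_n ≥ r_{k,n} for every k ≤ n. -/

import Mathlib

/-- The permanent of a rectangular `k × n` real matrix. -/
noncomputable def rperm {k n : ℕ} (A : Matrix (Fin k) (Fin n) ℝ) : ℝ :=
  ∑ σ : Fin k ↪ Fin n, ∏ i, A i (σ i)

/-- `permCount k n = r_{k,n}`: the number of distinct values attained by the permanent
on the set `Ω_{k,n}` of `k × n` matrices with `±1` entries. -/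
noncomputable def permCount (k n : ℕ) : ℕ :=
  {x : ℝ | ∃ A : Matrix (Fin k) (Fin n) ℝ,
      (∀ i j, A i j = 1 ∨ A i j = -1) ∧ rperm A = x}.ncard

theorem rperm_cons_one {k n : ℕ} (A : Matrix (Fin k) (Fin n) ℝ) :
    rperm (k := k + 1) (n := n) (Fin.cons (fun _ => (1 : ℝ)) A) = ((n - k : ℕ) : ℝ) * rperm A := by
  classical
  unfold rperm
  rw [← Equiv.sum_comp (Equiv.embeddingFinSucc k (Fin n)).symm, Fintype.sum_sigma, Finset.mul_sum]
  refine Finset.sum_congr rfl fun e _ => ?_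
  have hc : Fintype.card {i // i ∉ Set.range e} = n - k := by
    have h1 := Fintype.card_subtype_compl (fun i => i ∈ Set.range e)
    rw [h1]
    have h2 : Fintype.card {i // i ∈ Set.range e} = k := by
      exact (Fintype.card_congr (Equiv.ofInjective e e.injective)).symm.trans (Fintype.card_fin k)
    rw [h2, Fintype.card_fin]
  rw [Finset.sum_congr rfl (g := fun _ => ∏ i, A i (e i))]
  · rw [Finset.sum_const, Finset.card_univ, hc, nsmul_eq_mul]
  · intro i _
    rw [Fin.prod_univ_succ]
    simp only [Equiv.coe_embeddingFinSucc_symm, Fin.cons_zero, Fin.cons_succ]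
    exact one_mul _

theorem values_finite (k n : ℕ) : {x : ℝ | ∃ A : Matrix (Fin k) (Fin n) ℝ,
      (∀ i j, A i j = 1 ∨ A i j = -1) ∧ rperm A = x}.Finite := by
  refine (Set.finite_range (fun B : Fin k → Fin n → Bool =>
    rperm (k := k) (n := n) (fun i j => if B i j then (1 : ℝ) else -1))).subset ?_
  rintro x ⟨A, hA, rfl⟩
  classical
  refine ⟨fun i j => decide (A i j = 1), ?_⟩
  refine congrArg rperm (Matrix.ext fun i j => ?_)
  change (if decide (A i j = 1) = true then (1 : ℝ) else -1) = A i j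
  have h := hA i j
  rcases h with h | h
  · simp [h]
  · simp only [h]
    norm_num

theorem permCount_succ {k n : ℕ} (h : k + 1 ≤ n) : permCount k n ≤ permCount (k + 1) n := by
  unfold permCount
  refine Set.ncard_le_ncard_of_injOn (fun x => ((n - k : ℕ) : ℝ) * x) ?_ ?_ (values_finite _ _)
  · rintro x ⟨A, hA, rfl⟩
    refine ⟨Fin.cons (fun _ => (1 : ℝ)) A, ?_, rperm_cons_one A⟩
    intro i j
    refine Fin.cases ?_ (fun i => ?_) i
    · left; rfl
    · exact hA i j
  · intro x _ y _ hxy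
    have : ((n - k : ℕ) : ℝ) ≠ 0 := by
      rw [Nat.cast_ne_zero]; omega
    exact mul_left_cancel₀ this hxy

theorem permCount_mono (k l n : ℕ) (hkl : k ≤ l) (hln : l ≤ n) :
    permCount k n ≤ permCount l n := by
  induction l, hkl using Nat.le_induction with
  | base => exact le_rfl
  | succ m hm ih => exact (ih (by omega)).trans (permCount_succ hln)

/-- For `1 ≤ k ≤ ℓ ≤ n` one has `r_{k,n} ≤ r_{ℓ,n}`; in particular
`r_{k,n} ≤ r_n = r_{n,n}` for every `k ≤ n`. -/
theorem stmt4 :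
    (∀ k l n : ℕ, 1 ≤ k → k ≤ l → l ≤ n → permCount k n ≤ permCount l n) ∧
    (∀ k n : ℕ, 1 ≤ k → k ≤ n → permCount k n ≤ permCount n n) :=
  ⟨fun k l n _ h1 h2 => permCount_mono k l n h1 h2,
    fun k n _ h => permCount_mono k n n h le_rfl⟩
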